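/- Let f be in the real disc algebra A_ℝ(D) and suppose there exists a sequence of real numbers x_n converging to 0 with x_n not in the image f(D̄) of the closed unit disc under f. Then for every g ∈ A_ℝ(D) such that (f,g) is an invertible pair and g has constant sign on the real zeros of f, there exist units u and v of A_ℝ(D) with uf + vg = 1. -/

import Mathlib

open Complex Metric ComplexConjugate

/-- The real disc algebra `A_ℝ(D)`: functions continuous on the closed unit disc,
holomorphic on the open unit disc, satisfying `f z = conj (f (conj z))` on the closed disc. -/
def IsRDisc (f : ℂ → ℂ) : Prop :=
  ContinuousOn f (closedBall (0 : ℂ) 1) ∧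
  DifferentiableOn ℂ f (ball (0 : ℂ) 1) ∧
  ∀ z ∈ closedBall (0 : ℂ) 1, f z = conj (f (conj z))

/-- A unit of `A_ℝ(D)`: a member of the algebra with no zeros on the closed unit disc. -/
def IsRDiscUnit (f : ℂ → ℂ) : Prop :=
  IsRDisc f ∧ ∀ z ∈ closedBall (0 : ℂ) 1, f z ≠ 0

/-- The pair `(f, g)` is invertible in `A_ℝ(D)`: there are `α, β` in the algebra with
`α f + β g = 1` on the closed unit disc. -/
def BezoutPair (f g : ℂ → ℂ) : Prop :=
  ∃ α β : ℂ → ℂ, IsRDisc α ∧ IsRDisc β ∧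
    ∀ z ∈ closedBall (0 : ℂ) 1, α z * f z + β z * g z = 1

/-- The pairs `(f₁,g₁)` and `(f₂,g₂)` are sign-linked. -/
def SignLinked (f₁ g₁ f₂ g₂ : ℂ → ℂ) : Prop :=
  ∀ x y : ℝ, x ∈ Set.Icc (-1 : ℝ) 1 → y ∈ Set.Icc (-1 : ℝ) 1 →
    f₁ (x : ℂ) * g₂ (x : ℂ) - f₂ (x : ℂ) * g₁ (x : ℂ) = 0 →
    f₁ (y : ℂ) * g₂ (y : ℂ) - f₂ (y : ℂ) * g₁ (y : ℂ) = 0 →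
    ∀ lam mu : ℝ,
      f₂ (x : ℂ) = (lam : ℂ) * f₁ (x : ℂ) → g₂ (x : ℂ) = (lam : ℂ) * g₁ (x : ℂ) →
      f₂ (y : ℂ) = (mu : ℂ) * f₁ (y : ℂ) → g₂ (y : ℂ) = (mu : ℂ) * g₁ (y : ℂ) →
      0 < lam * mu

/-- `f` has constant sign on the real zeros of `g`: the (real) values `f x` over
`x ∈ [-1,1]` with `g x = 0` are either all positive or all negative. -/
def ConstSignOnRealZeros (f g : ℂ → ℂ) : Prop :=
  (∀ x ∈ Set.Icc (-1 : ℝ) 1, g (x : ℂ) = 0 → 0 < (f (x : ℂ)).re) ∨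
  (∀ x ∈ Set.Icc (-1 : ℝ) 1, g (x : ℂ) = 0 → (f (x : ℂ)).re < 0)

/-!
If some `w = g + k f` is a unit, then units `u`, `v` as required are written down explicitly from
`k`, `w` and a small real `x ≠ 0` omitted by `f`. So it suffices that `g` is congruent to a unit
modulo `f`. This property does not change when `g` varies continuously through functions without
common zeros with `f`; as polynomials are dense, `g` may be taken to be a real polynomial. By the
open mapping theorem, the omitted values force the zeros of `f ≠ 0` onto the unit circle, of which
they cover only a part. Hence a pair of conjugate roots of `g` can be moved inside the disc and then
out through the circle, where the corresponding factor becomes a unit. Only real roots in `(-1, 1)`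
may be trapped, namely when `f` vanishes at both `1` and `-1`; they can be moved to `0`, where two
of them form such a conjugate pair, and their number is even as `g 1` and `g (-1)` have the same
sign.
-/

open Filter Polynomial Topology
open scoped NNReal

lemma isPreconnected_closedBall_sdiff {E : Type*} [NormedAddCommGroup E] [NormedSpace ℝ E]
    {Z : Set E} {x : E} {r : ℝ} (hr : r ≠ 0) (hZ : Z ⊆ sphere x r) :
    IsPreconnected (closedBall x r \ Z) :=
  (convex_ball x r).isPreconnected.subset_closure
    (fun _ hy ↦ ⟨ball_subset_closedBall hy, fun hyZ ↦ (mem_ball.1 hy).ne (mem_sphere.1 (hZ hyZ))⟩)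
    (closure_ball x hr ▸ Set.sdiff_subset)

section ReduciblePair

variable {R : Type*}

/-- The pair `(f, g)` is reducible: `g` is congruent to a unit modulo `f`. -/
def IsReduciblePair [CommRing R] (f g : R) : Prop :=
  ∃ k, IsUnit (g + k * f)

namespace IsReduciblePair

section CommRing

variable [CommRing R] {f a b : R}

lemma of_isUnit_left (hf : IsUnit f) (g : R) : IsReduciblePair f g := by
  obtain ⟨f', hf'⟩ := hf.exists_left_inv
  refine ⟨(1 - g) * f', ?_⟩
  rw [mul_assoc, hf', mul_one, add_sub_cancel]
  exact isUnit_one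

lemma of_isUnit_right (f : R) {g : R} (hg : IsUnit g) : IsReduciblePair f g :=
  ⟨0, by rwa [zero_mul, add_zero]⟩

lemma mul (ha : IsReduciblePair f a) (hb : IsReduciblePair f b) : IsReduciblePair f (a * b) := by
  obtain ⟨k, hk⟩ := ha
  obtain ⟨l, hl⟩ := hb
  refine ⟨k * b + a * l + k * l * f, ?_⟩
  convert hk.mul hl using 1
  ring

lemma pow (ha : IsReduciblePair f a) (n : ℕ) : IsReduciblePair f (a ^ n) := by
  induction n with
  | zero => rw [pow_zero]; exact of_isUnit_right f isUnit_one
  | succ n ih => rw [pow_succ]; exact ih.mul ha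

lemma of_mul_left (ha : IsReduciblePair f a) (hab : IsReduciblePair f (a * b)) :
    IsReduciblePair f b := by
  obtain ⟨k, hk⟩ := ha
  obtain ⟨l, hl⟩ := hab
  obtain ⟨w, hw⟩ := hk.exists_left_inv
  refine ⟨w * (l - k * b), ?_⟩
  convert (IsUnit.of_mul_eq_one _ hw).mul hl using 1
  linear_combination -b * hw

lemma mul_iff_right (ha : IsReduciblePair f a) :
    IsReduciblePair f (a * b) ↔ IsReduciblePair f b :=
  ⟨ha.of_mul_left, ha.mul⟩

lemma add_mul_self_iff (c : R) : IsReduciblePair f (a + c * f) ↔ IsReduciblePair f a :=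
  ⟨fun ⟨k, hk⟩ ↦ ⟨c + k, by rwa [add_mul, ← add_assoc]⟩,
    fun ⟨k, hk⟩ ↦ ⟨k - c, by rwa [sub_mul, add_assoc, add_sub_cancel]⟩⟩

end CommRing

section NormedCommRing

variable [NormedCommRing R] [HasSummableGeomSeries R] {f g : R}

lemma eventually_iff (hfg : IsCoprime f g) :
    ∀ᶠ g' in 𝓝 g, IsReduciblePair f g' ↔ IsReduciblePair f g := by
  obtain ⟨α, β, hαβ⟩ := hfg
  have hcont : Continuous fun g' ↦ 1 + β * (g' - g) := by fun_prop
  have hunit : ∀ᶠ g' in 𝓝 g, IsUnit (1 + β * (g' - g)) :=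
    hcont.continuousAt.eventually_mem (Units.isOpen.mem_nhds (by simp))
  filter_upwards [hunit] with g' hU
  have hg' : g' = (1 + β * (g' - g)) * g + α * (g' - g) * f := by
    linear_combination (g - g') * hαβ
  rw [hg', add_mul_self_iff, (of_isUnit_right f hU).mul_iff_right]

lemma of_mem_closure (hfg : IsCoprime f g) (hg : g ∈ closure {g' | IsReduciblePair f g'}) :
    IsReduciblePair f g := by
  obtain ⟨g', hg', hiff⟩ :=
    ((mem_closure_iff_frequently.1 hg).and_eventually (eventually_iff hfg)).exists
  exact hiff.1 hg'

lemma iff_of_isPreconnected {X : Type*} [TopologicalSpace X] {s : Set X} (hs : IsPreconnected s)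
    {γ : X → R} (hγ : ContinuousOn γ s) (hcop : ∀ x ∈ s, IsCoprime f (γ x)) {x y : X}
    (hx : x ∈ s) (hy : y ∈ s) : IsReduciblePair f (γ x) ↔ IsReduciblePair f (γ y) :=
  hs.induction₂ (fun x y ↦ IsReduciblePair f (γ x) ↔ IsReduciblePair f (γ y))
    (fun x hx ↦ ((hγ x hx).eventually (eventually_iff (hcop x hx))).mono fun _ h ↦ h.symm)
    (fun _ _ _ _ _ _ ↦ Iff.trans) (fun _ _ _ _ ↦ Iff.symm) hx hy

lemma of_isUnit_of_one_lt_norm {E : Type*} [NormedAddCommGroup E] [NormedSpace ℝ E] {γ : E → R}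
    {Z : Set E} (hγ : Continuous γ) (hZ : Z ⊂ sphere 0 1) (hcop : ∀ x ∉ Z, IsCoprime f (γ x))
    (hunit : ∀ x, 1 < ‖x‖ → IsUnit (γ x)) {x : E} (hx : x ∉ Z) : IsReduciblePair f (γ x) := by
  have houter {y : E} (hy : y ∉ ball 0 1) (hyZ : y ∉ Z) : IsReduciblePair f (γ y) := by
    have hcl : y ∈ closure (closedBall 0 1)ᶜ := by
      rwa [closure_compl, interior_closedBall _ one_ne_zero]
    refine of_mem_closure (hcop y hyZ) (map_mem_closure hγ hcl fun z hz ↦ ?_)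
    exact of_isUnit_right f (hunit z (by simpa using hz))
  by_cases hxb : x ∈ ball 0 1
  · obtain ⟨e, he, heZ⟩ := Set.exists_of_ssubset hZ
    refine (iff_of_isPreconnected (isPreconnected_closedBall_sdiff one_ne_zero hZ.subset)
      hγ.continuousOn (fun y hy ↦ hcop y hy.2) ⟨ball_subset_closedBall hxb, hx⟩
      ⟨sphere_subset_closedBall he, heZ⟩).2 (houter ?_ heZ)
    exact fun h ↦ (mem_ball.1 h).ne (mem_sphere.1 he)
  · exact houter hxb hx

end NormedCommRing

end IsReduciblePair

variable [NormedCommRing R] [HasSummableGeomSeries R] {f g : R}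

lemma eventually_isCoprime (hfg : IsCoprime f g) : ∀ᶠ g' in 𝓝 g, IsCoprime f g' := by
  obtain ⟨α, β, hαβ⟩ := hfg
  have hcont : Continuous fun g' ↦ α * f + β * g' := by fun_prop
  have hunit : ∀ᶠ g' in 𝓝 g, IsUnit (α * f + β * g') :=
    hcont.continuousAt.eventually_mem (Units.isOpen.mem_nhds (by simp [hαβ]))
  filter_upwards [hunit] with g' hu
  obtain ⟨w, hw⟩ := hu.exists_left_inv
  exact ⟨w * α, w * β, by linear_combination hw⟩

section NormedAlgebra

variable {𝕜 : Type*} [NontriviallyNormedField 𝕜] [NormedAlgebra 𝕜 R]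

lemma frequently_punctured_isUnit_algebraMap_sub
    (h : ∃ᶠ x : 𝕜 in 𝓝 0, IsUnit (algebraMap 𝕜 R x - f)) :
    ∃ᶠ x : 𝕜 in 𝓝[≠] 0, IsUnit (algebraMap 𝕜 R x - f) := by
  rw [← nhdsNE_sup_pure, frequently_sup] at h
  refine h.elim id fun h0 ↦ ?_
  have hcont : Continuous fun x : 𝕜 ↦ algebraMap 𝕜 R x - f :=
    (continuous_algebraMap 𝕜 R).sub continuous_const
  rw [pure_zero] at h0
  exact ((hcont.continuousAt.eventually_mem
    (Units.isOpen.mem_nhds (by simpa using h0))).filter_mono nhdsWithin_le_nhds).frequently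

/-- With `w = g + k f` and `x` small, the units `u = -(1 - x k / w) / (x - f)` and
`v = (x / w) / (x - f)` do the job. -/
lemma IsReduciblePair.exists_isUnit_mul_add_mul_eq_one (hfg : IsReduciblePair f g)
    (h : ∃ᶠ x : 𝕜 in 𝓝 0, IsUnit (algebraMap 𝕜 R x - f)) :
    ∃ u v : R, IsUnit u ∧ IsUnit v ∧ u * f + v * g = 1 := by
  obtain ⟨k, hk⟩ := hfg
  obtain ⟨w, hw⟩ := hk.exists_left_inv
  have hsmall : ∀ᶠ x : 𝕜 in 𝓝[≠] 0, IsUnit (algebraMap 𝕜 R x * k * w - 1) := by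
    have hcont : Continuous fun x : 𝕜 ↦ algebraMap 𝕜 R x * k * w - 1 := by
      have := continuous_algebraMap 𝕜 R
      fun_prop
    exact (hcont.continuousAt.eventually_mem
      (Units.isOpen.mem_nhds (by simp))).filter_mono nhdsWithin_le_nhds
  obtain ⟨x, hxf, hxu, hx0⟩ := ((frequently_punctured_isUnit_algebraMap_sub h).and_eventually
    (hsmall.and self_mem_nhdsWithin)).exists
  obtain ⟨s, hs⟩ := hxf.exists_left_inv
  have hs_unit : IsUnit s := .of_mul_eq_one _ hs
  refine ⟨(algebraMap 𝕜 R x * k * w - 1) * s, algebraMap 𝕜 R x * w * s, hxu.mul hs_unit,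
    (((IsUnit.mk0 x hx0).map (algebraMap 𝕜 R)).mul (.of_mul_eq_one _ hw)).mul hs_unit, ?_⟩
  linear_combination s * algebraMap 𝕜 R x * hw + hs

end NormedAlgebra

end ReduciblePair

section Characters

variable {𝕜 A : Type*} [NontriviallyNormedField 𝕜] [CompleteSpace 𝕜] [NormedCommRing A]
  [NormedAlgebra 𝕜 A] {a f : A} {p : 𝕜[X]}

lemma finite_quotient_of_denseRange_aeval (ha : DenseRange (aeval a : 𝕜[X] → A)) (I : Ideal A)
    [IsClosed (I : Set A)] (hp : p ≠ 0) (hpI : aeval a p ∈ I) : Module.Finite 𝕜 (A ⧸ I) := by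
  have hint : IsIntegral 𝕜 (Ideal.Quotient.mk I a) :=
    IsAlgebraic.isIntegral ⟨p, hp, by
      rw [← Ideal.Quotient.mkₐ_eq_mk 𝕜, aeval_algHom_apply, Ideal.Quotient.mkₐ_eq_mk,
        Ideal.Quotient.eq_zero_iff_mem.2 hpI]⟩
  have hfin : Module.Finite 𝕜 (Algebra.adjoin 𝕜 {Ideal.Quotient.mk I a}) :=
    Algebra.finite_adjoin_simple_of_isIntegral hint
  have hclosed : IsClosed (Algebra.adjoin 𝕜 {Ideal.Quotient.mk I a} : Set (A ⧸ I)) :=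
    Submodule.closed_of_finiteDimensional
      (Subalgebra.toSubmodule (Algebra.adjoin 𝕜 {Ideal.Quotient.mk I a}))
  have hdense : DenseRange (aeval (Ideal.Quotient.mk I a) : 𝕜[X] → A ⧸ I) := by
    convert (Ideal.Quotient.mk_surjective (I := I)).denseRange.comp ha continuous_quot_mk using 1
    ext q
    exact aeval_algHom_apply (Ideal.Quotient.mkₐ 𝕜 I) a q
  have htop : Algebra.adjoin 𝕜 {Ideal.Quotient.mk I a} = ⊤ := by
    rw [← SetLike.coe_set_eq, ← hclosed.closure_eq, Algebra.adjoin_singleton_eq_range_aeval]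
    exact hdense.closure_range
  rw [Module.finite_def, ← Algebra.top_toSubmodule, ← htop]
  exact Module.Finite.iff_fg.1 hfin

lemma exists_continuous_algHom_of_not_isCoprime [HasSummableGeomSeries A] {K : Type*}
    [NormedField K] [IsAlgClosed K] [NormedAlgebra 𝕜 K]
    (ha : DenseRange (aeval a : 𝕜[X] → A)) (hp : p ≠ 0) (hfp : ¬IsCoprime f (aeval a p)) :
    ∃ φ : A →ₐ[𝕜] K, Continuous φ ∧ φ f = 0 ∧ φ (aeval a p) = 0 := by
  obtain ⟨M, hM, hle⟩ := Ideal.exists_le_maximal (Ideal.span {f} ⊔ Ideal.span {aeval a p})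
    fun h ↦ hfp (Ideal.isCoprime_span_singleton_iff _ _ |>.1 (Ideal.isCoprime_iff_sup_eq.2 h))
  have hfM : f ∈ M := hle (Ideal.mem_sup_left (Ideal.mem_span_singleton_self f))
  have hpM : aeval a p ∈ M := hle (Ideal.mem_sup_right (Ideal.mem_span_singleton_self _))
  have : IsClosed (M : Set A) := by
    rw [← hM.closure_eq, Ideal.coe_closure]
    exact isClosed_closure
  have := finite_quotient_of_denseRange_aeval ha M hp hpM
  let _ : Field (A ⧸ M) := Ideal.Quotient.field M
  let ψ : A ⧸ M →ₐ[𝕜] K := IsAlgClosed.lift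
  refine ⟨ψ.comp (Ideal.Quotient.mkₐ 𝕜 M),
    ψ.toLinearMap.continuous_of_finiteDimensional.comp continuous_quot_mk, ?_, ?_⟩
  · simp [Ideal.Quotient.eq_zero_iff_mem.2 hfM]
  · simp [Ideal.Quotient.eq_zero_iff_mem.2 hpM]

end Characters

lemma conj_mem_closedBall_zero {z : ℂ} {r : ℝ} (hz : z ∈ closedBall (0 : ℂ) r) :
    conj z ∈ closedBall (0 : ℂ) r := by
  simpa using hz

lemma exists_polynomial_norm_eval_sub_lt {f : ℂ → ℂ} {r R : ℝ≥0} {ε : ℝ} (hr : r < R)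
    (hf : DifferentiableOn ℂ f (ball 0 R)) (hε : 0 < ε) :
    ∃ P : ℂ[X], ∀ z ∈ closedBall (0 : ℂ) r, ‖P.eval z - f z‖ < ε := by
  obtain ⟨s, hrs, hsR⟩ := exists_between hr
  obtain ⟨t, hst, htR⟩ := exists_between hsR
  have hseries := (hf.mono (closedBall_subset_ball htR)).hasFPowerSeriesOnBall
    (zero_le.trans_lt (hrs.trans hst))
  obtain ⟨n, hn⟩ := (tendstoUniformlyOn_iff.1
    (hseries.tendstoUniformlyOn (ENNReal.coe_lt_coe.2 hst)) ε hε).exists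
  refine ⟨∑ k ∈ Finset.range n, C ((cauchyPowerSeries f 0 t).coeff k) * X ^ k, fun z hz ↦ ?_⟩
  have hz' := hn z (closedBall_subset_ball hrs hz)
  rw [zero_add, dist_comm, dist_eq_norm, FormalMultilinearSeries.partialSum] at hz'
  simpa only [FormalMultilinearSeries.apply_eq_pow_smul_coeff, smul_eq_mul, eval_finsetSum,
    eval_mul, eval_C, eval_pow, eval_X, mul_comm] using hz'

lemma exists_norm_dilation_sub_lt {f : ℂ → ℂ} {ε : ℝ} (hf : ContinuousOn f (closedBall 0 1))
    (hε : 0 < ε) :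
    ∃ r : ℝ≥0, 0 < r ∧ r < 1 ∧ ∀ z ∈ closedBall (0 : ℂ) 1, ‖f (r * z) - f z‖ < ε := by
  obtain ⟨δ, hδ, hfδ⟩ := uniformContinuousOn_iff.1
    ((isCompact_closedBall (0 : ℂ) 1).uniformContinuousOn_of_continuous hf) ε hε
  obtain ⟨r, hr, hr1⟩ := exists_between (max_lt zero_lt_one (sub_lt_self 1 hδ))
  rw [max_lt_iff] at hr
  lift r to ℝ≥0 using hr.1.le
  refine ⟨r, mod_cast hr.1, mod_cast hr1, fun z hz ↦ ?_⟩
  rw [← dist_eq_norm]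
  rw [mem_closedBall_zero_iff] at hz
  have hrz : ‖(r : ℂ) * z‖ ≤ 1 := by
    rw [norm_mul]
    exact mul_le_one₀ (by simpa using hr1.le) (norm_nonneg z) hz
  refine hfδ _ (mem_closedBall_zero_iff.2 hrz) _ (mem_closedBall_zero_iff.2 hz) ?_
  calc dist ((r : ℂ) * z) z = (1 - r) * ‖z‖ := by
        rw [dist_comm, dist_eq_norm, ← one_sub_mul, norm_mul]
        congr 1
        exact_mod_cast Real.norm_of_nonneg (sub_nonneg.2 hr1.le)
    _ < δ := by nlinarith [norm_nonneg z]

lemma exists_real_polynomial_aeval_eq (P : ℂ[X]) :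
    ∃ p : ℝ[X], ∀ z : ℂ, aeval z p = (P.eval z + conj (P.eval (conj z))) / 2 := by
  induction P using Polynomial.induction_on' with
  | add P Q hP hQ =>
    obtain ⟨p, hp⟩ := hP
    obtain ⟨q, hq⟩ := hQ
    refine ⟨p + q, fun z ↦ ?_⟩
    rw [map_add, hp, hq, eval_add, eval_add, map_add]
    ring
  | monomial n a =>
    refine ⟨monomial n a.re, fun z ↦ ?_⟩
    rw [aeval_monomial, eval_monomial, eval_monomial, map_mul, map_pow, conj_conj,
      coe_algebraMap, re_eq_add_conj]
    ring

/-- The real polynomial `(X - c) (X - conj c)`. -/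
noncomputable def conjPairPoly (c : ℂ) : ℝ[X] :=
  X ^ 2 - C (2 * c.re) * X + C (‖c‖ ^ 2)

lemma conjPairPoly_monic (c : ℂ) : (conjPairPoly c).Monic := by
  unfold conjPairPoly
  monicity!

lemma aeval_conjPairPoly (c z : ℂ) : aeval z (conjPairPoly c) = (z - c) * (z - conj c) := by
  have hre : (2 * c.re : ℂ) = c + conj c := by rw [add_conj]; norm_cast
  have hnorm : (‖c‖ : ℂ) ^ 2 = c * conj c := (mul_conj' c).symm
  simp only [conjPairPoly, map_add, map_sub, map_mul, map_pow, aeval_X, aeval_C, coe_algebraMap,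
    ofReal_ofNat, hre, hnorm]
  ring

lemma aeval_conjPairPoly_eq_zero_iff {c z : ℂ} :
    aeval z (conjPairPoly c) = 0 ↔ z = c ∨ z = conj c := by
  rw [aeval_conjPairPoly, mul_eq_zero, sub_eq_zero, sub_eq_zero]

lemma eval_conjPairPoly_nonneg (c : ℂ) (t : ℝ) : 0 ≤ (conjPairPoly c).eval t := by
  have hnorm : ‖c‖ ^ 2 = c.re * c.re + c.im * c.im := by rw [← normSq_eq_norm_sq, normSq_apply]
  have hsq : (conjPairPoly c).eval t = (t - c.re) ^ 2 + c.im ^ 2 := by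
    simp only [conjPairPoly, eval_add, eval_sub, eval_mul, eval_pow, eval_X, eval_C, hnorm]
    ring
  rw [hsq]
  positivity

lemma aeval_ofReal_re (p : ℝ[X]) (t : ℝ) : (aeval (t : ℂ) p).re = p.eval t := by
  rw [← coe_algebraMap, aeval_algebraMap_apply, coe_aeval_eq_eval, coe_algebraMap, ofReal_re]

lemma exists_associated_X_sub_C_or_conjPairPoly {π : ℝ[X]} (hπ : Irreducible π) :
    ∃ c : ℂ, aeval c π = 0 ∧
      (c.im = 0 ∧ Associated (X - C c.re) π ∨ Associated (conjPairPoly c) π) := by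
  obtain ⟨c, hc⟩ := IsAlgClosed.exists_aeval_eq_zero ℂ π (degree_pos_of_irreducible hπ).ne'
  have of_root {q : ℝ[X]} (hqπ : q ∣ π) (hq : aeval c q = 0) : Associated q π :=
    (hπ.dvd_iff.1 hqπ).resolve_left (fun h ↦ (h.map (aeval c)).ne_zero hq) |>.symm
  refine ⟨c, hc, ?_⟩
  by_cases him : c.im = 0
  · obtain ⟨a, rfl⟩ : ∃ a : ℝ, (a : ℂ) = c := ⟨c.re, Complex.ext rfl him.symm⟩
    refine .inl ⟨him, of_root (dvd_iff_isRoot.2 ?_) (by simp)⟩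
    rw [← coe_algebraMap, aeval_algebraMap_apply, map_eq_zero] at hc
    exact hc
  · exact .inr (of_root (quadratic_dvd_of_aeval_eq_zero_im_ne_zero π hc him)
      (aeval_conjPairPoly_eq_zero_iff.2 (.inl rfl)))

namespace IsRDisc

variable {f g : ℂ → ℂ}

lemma const (a : ℝ) : IsRDisc fun _ ↦ (a : ℂ) :=
  ⟨continuousOn_const, differentiableOn_const _, fun _ _ ↦ (conj_ofReal a).symm⟩

protected lemma id : IsRDisc fun z ↦ z :=
  ⟨continuousOn_id, differentiableOn_id, fun z _ ↦ (conj_conj z).symm⟩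

lemma add (hf : IsRDisc f) (hg : IsRDisc g) : IsRDisc fun z ↦ f z + g z :=
  ⟨hf.1.add hg.1, hf.2.1.add hg.2.1, fun z hz ↦ by
    rw [map_add, ← hf.2.2 z hz, ← hg.2.2 z hz]⟩

lemma mul (hf : IsRDisc f) (hg : IsRDisc g) : IsRDisc fun z ↦ f z * g z :=
  ⟨hf.1.mul hg.1, hf.2.1.mul hg.2.1, fun z hz ↦ by
    rw [map_mul, ← hf.2.2 z hz, ← hg.2.2 z hz]⟩

lemma inv (hf : IsRDisc f) (h0 : ∀ z ∈ closedBall (0 : ℂ) 1, f z ≠ 0) :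
    IsRDisc fun z ↦ (f z)⁻¹ :=
  ⟨hf.1.inv₀ h0, hf.2.1.inv fun z hz ↦ h0 z (ball_subset_closedBall hz), fun z hz ↦ by
    rw [map_inv₀, ← hf.2.2 z hz]⟩

lemma of_tendstoUniformlyOn {ι : Type*} {l : Filter ι} [l.NeBot] {F : ι → ℂ → ℂ}
    (hF : ∀ i, IsRDisc (F i)) (h : TendstoUniformlyOn F f l (closedBall 0 1)) : IsRDisc f := by
  refine ⟨h.continuousOn (.of_forall fun i ↦ (hF i).1),
    (h.mono ball_subset_closedBall).tendstoLocallyUniformlyOn.differentiableOn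
      (.of_forall fun i ↦ (hF i).2.1) isOpen_ball, fun z hz ↦ ?_⟩
  refine tendsto_nhds_unique (h.tendsto_at hz) ?_
  simpa only [Function.comp_def, ← (hF _).2.2 z hz] using
    (continuous_conj.tendsto _).comp (h.tendsto_at (conj_mem_closedBall_zero hz))

end IsRDisc

/-- The real disc algebra `A_ℝ(D)` as a subalgebra of `C(D̄, ℂ)`, so that it carries the sup norm. A
function `ℂ → ℂ` as in `IsRDisc` is identified with its restriction to the closed disc. -/
def realDiscAlgebra : Subalgebra ℝ C(closedBall (0 : ℂ) 1, ℂ) where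
  carrier := {F | ∃ f, IsRDisc f ∧ ∀ z : closedBall (0 : ℂ) 1, F z = f z}
  mul_mem' := by
    rintro F G ⟨f, hf, hFf⟩ ⟨g, hg, hGg⟩
    exact ⟨_, hf.mul hg, fun z ↦ congrArg₂ (· * ·) (hFf z) (hGg z)⟩
  add_mem' := by
    rintro F G ⟨f, hf, hFf⟩ ⟨g, hg, hGg⟩
    exact ⟨_, hf.add hg, fun z ↦ congrArg₂ (· + ·) (hFf z) (hGg z)⟩
  algebraMap_mem' a := ⟨_, .const a, fun _ ↦ rfl⟩

/-- The element of the real disc algebra represented by a function `ℂ → ℂ`. -/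
def IsRDisc.toRealDiscAlgebra {f : ℂ → ℂ} (hf : IsRDisc f) : realDiscAlgebra :=
  ⟨⟨fun z ↦ f z, hf.1.domRestrict⟩, f, hf, fun _ ↦ rfl⟩

namespace realDiscAlgebra

lemma isClosed : IsClosed (realDiscAlgebra : Set C(closedBall (0 : ℂ) 1, ℂ)) := by
  refine IsSeqClosed.isClosed fun F G hF hFG ↦ ?_
  choose f hf hFf using hF
  have hG (z : closedBall (0 : ℂ) 1) : Function.extend Subtype.val G 0 z = G z :=
    Subtype.val_injective.extend_apply _ _ _
  refine ⟨_, .of_tendstoUniformlyOn hf (l := atTop) ?_, fun z ↦ (hG z).symm⟩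
  rw [tendstoUniformlyOn_iff_tendstoUniformly_comp_coe]
  convert ContinuousMap.tendsto_iff_tendstoUniformly.1 hFG using 2 with n
  · exact funext fun z ↦ (hFf n z).symm
  · exact funext hG

instance : CompleteSpace realDiscAlgebra :=
  isClosed.completeSpace_coe

variable {F G : realDiscAlgebra} {p q : ℝ[X]} {c : ℂ}

lemma exists_isRDisc (F : realDiscAlgebra) :
    ∃ (f : ℂ → ℂ) (hf : IsRDisc f), hf.toRealDiscAlgebra = F := by
  obtain ⟨f, hf, hFf⟩ := F.2
  exact ⟨f, hf, Subtype.ext (ContinuousMap.ext fun z ↦ (hFf z).symm)⟩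

lemma isUnit_iff : IsUnit F ↔ ∀ z, F.1 z ≠ 0 := by
  refine ⟨fun h z ↦ ?_, fun h0 ↦ ?_⟩
  · exact (h.map ((ContinuousMap.evalAlgHom ℝ ℂ z).comp realDiscAlgebra.val)).ne_zero
  · obtain ⟨f, hf, rfl⟩ := exists_isRDisc F
    have hf0 : ∀ z ∈ closedBall (0 : ℂ) 1, f z ≠ 0 := fun z hz ↦ h0 ⟨z, hz⟩
    refine .of_mul_eq_one (hf.inv hf0).toRealDiscAlgebra ?_
    ext z
    exact mul_inv_cancel₀ (hf0 z z.2)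

lemma exists_isRDiscUnit (hF : IsUnit F) : ∃ u, IsRDiscUnit u ∧ ∀ z, F.1 z = u z := by
  obtain ⟨f, hf, rfl⟩ := exists_isRDisc F
  exact ⟨f, ⟨hf, fun z hz ↦ isUnit_iff.1 hF ⟨z, hz⟩⟩, fun _ ↦ rfl⟩

lemma isCoprime_toRealDiscAlgebra {f g : ℂ → ℂ} (hf : IsRDisc f) (hg : IsRDisc g)
    (h : BezoutPair f g) : IsCoprime hf.toRealDiscAlgebra hg.toRealDiscAlgebra := by
  obtain ⟨α, β, hα, hβ, h1⟩ := h
  exact ⟨hα.toRealDiscAlgebra, hβ.toRealDiscAlgebra,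
    Subtype.ext (ContinuousMap.ext fun z ↦ h1 z z.2)⟩

/-- The coordinate function `z ↦ z`. -/
def coord : realDiscAlgebra :=
  IsRDisc.id.toRealDiscAlgebra

lemma aeval_coord_apply (p : ℝ[X]) (z : closedBall (0 : ℂ) 1) :
    (aeval coord p).1 z = aeval (z : ℂ) p :=
  (aeval_algHom_apply ((ContinuousMap.evalAlgHom ℝ ℂ z).comp realDiscAlgebra.val) coord p).symm

lemma denseRange_aeval_coord : DenseRange (aeval coord : ℝ[X] → realDiscAlgebra) := by
  refine fun F ↦ mem_closure_range_iff.2 fun ε hε ↦ ?_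
  obtain ⟨f, hf, rfl⟩ := exists_isRDisc F
  obtain ⟨r, hr0, hr1, hr⟩ := exists_norm_dilation_sub_lt hf.1 (half_pos hε)
  have hdil : DifferentiableOn ℂ (fun z ↦ f (r * z)) (ball 0 (r⁻¹ : ℝ≥0)) :=
    hf.2.1.comp (by fun_prop) fun z hz ↦ by
      rw [mem_ball_zero_iff] at hz ⊢
      simpa [hr0.ne'] using mul_lt_mul_of_pos_left hz (NNReal.coe_pos.2 hr0)
  obtain ⟨P, hP⟩ := exists_polynomial_norm_eval_sub_lt ((one_lt_inv₀ hr0).2 hr1) hdil (half_pos hε)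
  have hPf {z : ℂ} (hz : z ∈ closedBall (0 : ℂ) 1) : ‖P.eval z - f z‖ < ε := by
    linarith [norm_sub_le_norm_sub_add_norm_sub (P.eval z) (f (r * z)) (f z), hr z hz, hP z hz]
  obtain ⟨p, hp⟩ := exists_real_polynomial_aeval_eq P
  refine ⟨p, ?_⟩
  rw [dist_comm, dist_eq_norm]
  refine (ContinuousMap.norm_lt_iff _ hε).2 fun z ↦ ?_
  have hsymm : aeval (z : ℂ) p - f z =
      ((P.eval (z : ℂ) - f z) + conj (P.eval (conj (z : ℂ)) - f (conj (z : ℂ)))) / 2 := by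
    rw [hp, map_sub, ← hf.2.2 z z.2]
    ring
  calc ‖(aeval coord p).1 z - f z‖ = ‖aeval (z : ℂ) p - f z‖ := by rw [aeval_coord_apply]
    _ < ε := by
      rw [hsymm, norm_div, norm_ofNat, div_lt_iff₀ two_pos]
      refine (norm_add_le _ _).trans_lt ?_
      rw [norm_conj, mul_two]
      exact add_lt_add (hPf z.2) (hPf (conj_mem_closedBall_zero z.2))

/-- The zeros in the closed unit disc, as a subset of the plane. -/
def zeroSet (F : realDiscAlgebra) : Set ℂ :=
  (↑) '' {z : closedBall (0 : ℂ) 1 | F.1 z = 0}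

lemma isUnit_aeval_coord_iff :
    IsUnit (aeval coord p) ↔ ∀ z ∈ closedBall (0 : ℂ) 1, aeval z p ≠ 0 := by
  rw [isUnit_iff, Subtype.forall]
  exact forall₂_congr fun z hz ↦ by rw [aeval_coord_apply]

lemma isUnit_aeval_coord_conjPairPoly (hc : 1 < ‖c‖) :
    IsUnit (aeval coord (conjPairPoly c)) := by
  refine isUnit_aeval_coord_iff.2 fun z hz h ↦ ?_
  have hzc : ‖z‖ = ‖c‖ := by
    rcases aeval_conjPairPoly_eq_zero_iff.1 h with rfl | rfl
    exacts [rfl, norm_conj c]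
  exact (mem_closedBall_zero_iff.1 hz).not_gt (hzc ▸ hc)

lemma isUnit_aeval_coord_X_sub_C {a : ℝ} (ha : 1 < ‖a‖) : IsUnit (aeval coord (X - C a)) := by
  refine isUnit_aeval_coord_iff.2 fun z hz h ↦ ?_
  rw [map_sub, aeval_X, aeval_C, sub_eq_zero] at h
  rw [h, mem_closedBall_zero_iff, norm_algebraMap'] at hz
  exact hz.not_gt ha

lemma exists_eq_apply_of_continuous {φ : realDiscAlgebra →ₐ[ℝ] ℂ} (hφ : Continuous φ) :
    ∃ z, ∀ F, φ F = F.1 z := by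
  have hcoord : φ coord ∈ closedBall (0 : ℂ) 1 := by
    by_contra hout
    have hnorm : 1 < ‖φ coord‖ := by simpa using hout
    refine ((isUnit_aeval_coord_conjPairPoly hnorm).map φ).ne_zero ?_
    rw [← aeval_algHom_apply, aeval_conjPairPoly, sub_self, zero_mul]
  refine ⟨⟨φ coord, hcoord⟩, congrFun (denseRange_aeval_coord.equalizer hφ ?_ ?_)⟩
  · fun_prop
  · ext p
    rw [Function.comp_apply, Function.comp_apply, aeval_coord_apply, aeval_algHom_apply]

lemma eq_zero_of_mem_zeroSet {f : ℂ → ℂ} {hf : IsRDisc f}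
    (hc : c ∈ zeroSet hf.toRealDiscAlgebra) : f c = 0 := by
  obtain ⟨z, hz, rfl⟩ := hc
  exact hz

lemma conj_mem_zeroSet (hc : c ∈ zeroSet F) : conj c ∈ zeroSet F := by
  obtain ⟨f, hf, rfl⟩ := exists_isRDisc F
  have hfc : f (conj c) = 0 := by
    obtain ⟨z, hz, rfl⟩ := hc
    rw [← map_eq_zero (starRingEnd ℂ), ← hf.2.2 z z.2]
    exact hz
  obtain ⟨z, -, rfl⟩ := hc
  exact ⟨⟨conj (z : ℂ), conj_mem_closedBall_zero z.2⟩, hfc, rfl⟩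

lemma isCoprime_aeval_coord_iff (hp : p ≠ 0) :
    IsCoprime F (aeval coord p) ↔ ∀ c ∈ zeroSet F, aeval c p ≠ 0 := by
  refine ⟨?_, fun h ↦ ?_⟩
  · rintro ⟨α, β, hαβ⟩ _ ⟨z, hz, rfl⟩ hpz
    have h1 : α.1 z * F.1 z + β.1 z * (aeval coord p).1 z = 1 :=
      congrArg (fun G : realDiscAlgebra ↦ G.1 z) hαβ
    rw [show F.1 z = 0 from hz, aeval_coord_apply, hpz, mul_zero, mul_zero, add_zero] at h1
    exact zero_ne_one h1
  · by_contra hcop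
    obtain ⟨φ, hφ, hφF, hφp⟩ :=
      exists_continuous_algHom_of_not_isCoprime (K := ℂ) denseRange_aeval_coord hp hcop
    obtain ⟨z, hz⟩ := exists_eq_apply_of_continuous hφ
    refine h z ⟨z, (hz F).symm.trans hφF, rfl⟩ ?_
    rw [← aeval_coord_apply, ← hz, hφp]

lemma isCoprime_aeval_coord_conjPairPoly (hc : c ∉ zeroSet F) :
    IsCoprime F (aeval coord (conjPairPoly c)) := by
  refine (isCoprime_aeval_coord_iff (conjPairPoly_monic c).ne_zero).2 fun z hz h ↦ hc ?_
  rcases aeval_conjPairPoly_eq_zero_iff.1 h with rfl | rfl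
  · exact hz
  · simpa using conj_mem_zeroSet hz

lemma isCoprime_aeval_coord_X_sub_C {a : ℝ} (ha : (a : ℂ) ∉ zeroSet F) :
    IsCoprime F (aeval coord (X - C a)) := by
  refine (isCoprime_aeval_coord_iff (X_sub_C_ne_zero a)).2 fun z hz h ↦ ha ?_
  rw [map_sub, aeval_X, aeval_C, coe_algebraMap, sub_eq_zero] at h
  exact h ▸ hz

lemma continuous_aeval_coord_conjPairPoly :
    Continuous fun c ↦ aeval coord (conjPairPoly c) := by
  have := continuous_algebraMap ℝ realDiscAlgebra
  simp only [conjPairPoly, map_add, map_sub, map_mul, map_pow, aeval_X, aeval_C]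
  fun_prop

lemma continuous_aeval_coord_X_sub_C :
    Continuous fun a : ℝ ↦ aeval coord (X - C a) := by
  simp only [map_sub, aeval_X, aeval_C]
  exact continuous_const.sub (continuous_algebraMap ℝ realDiscAlgebra)

lemma isReduciblePair_conjPairPoly (hF : zeroSet F ⊂ sphere 0 1) (hc : c ∉ zeroSet F) :
    IsReduciblePair F (aeval coord (conjPairPoly c)) :=
  .of_isUnit_of_one_lt_norm (γ := fun c ↦ aeval coord (conjPairPoly c))
    continuous_aeval_coord_conjPairPoly hF (fun _ ↦ isCoprime_aeval_coord_conjPairPoly)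
    (fun _ ↦ isUnit_aeval_coord_conjPairPoly) hc

lemma preimage_ofReal_zeroSet_subset (hF : zeroSet F ⊆ sphere 0 1) :
    (ofReal ⁻¹' zeroSet F) ⊆ sphere (0 : ℝ) 1 := fun a ha ↦ by
  simpa using hF ha

lemma zero_notMem_zeroSet (hF : zeroSet F ⊆ sphere 0 1) : 0 ∉ zeroSet F := fun h ↦ by
  simpa using hF h

lemma isReduciblePair_coord (hF : zeroSet F ⊆ sphere 0 1)
    (h : ¬(1 ∈ zeroSet F ∧ -1 ∈ zeroSet F)) :
    IsReduciblePair F coord := by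
  have hlt : ofReal ⁻¹' zeroSet F ⊂ sphere (0 : ℝ) 1 :=
    (preimage_ofReal_zeroSet_subset hF).ssubset_of_not_subset fun hsub ↦
      h ⟨by simpa using hsub (show (1 : ℝ) ∈ _ by simp),
        by simpa using hsub (show (-1 : ℝ) ∈ _ by simp)⟩
  simpa using IsReduciblePair.of_isUnit_of_one_lt_norm continuous_aeval_coord_X_sub_C hlt
    (fun _ ↦ isCoprime_aeval_coord_X_sub_C) (fun _ ↦ isUnit_aeval_coord_X_sub_C)
    (x := 0) (by simpa using zero_notMem_zeroSet hF)

lemma isReduciblePair_coord_mul_X_sub_C (hF : zeroSet F ⊂ sphere 0 1) {a : ℝ} (ha : ‖a‖ ≤ 1)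
    (haF : (a : ℂ) ∉ zeroSet F) : IsReduciblePair F (coord * aeval coord (X - C a)) := by
  have h0 : ((0 : ℝ) : ℂ) ∉ zeroSet F := by simpa using zero_notMem_zeroSet hF.subset
  have hcoord : IsCoprime F coord := by simpa using isCoprime_aeval_coord_X_sub_C h0
  refine (IsReduciblePair.iff_of_isPreconnected
    (isPreconnected_closedBall_sdiff one_ne_zero (preimage_ofReal_zeroSet_subset hF.subset))
    (γ := fun s ↦ coord * aeval coord (X - C s))
    (continuous_const.mul continuous_aeval_coord_X_sub_C).continuousOn
    (fun s hs ↦ hcoord.mul_right (isCoprime_aeval_coord_X_sub_C hs.2))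
    ⟨mem_closedBall_zero_iff.2 ha, haF⟩ ⟨mem_closedBall_self zero_le_one, h0⟩).2 ?_
  simpa [conjPairPoly, sq] using isReduciblePair_conjPairPoly hF (zero_notMem_zeroSet hF.subset)

/-- Reducibility of `(F, p)` up to a power of the coordinate function whose parity accounts for the
sign of `p 1 * p (-1)`. Unlike reducibility of `(F, p)`, it can be checked on the irreducible
factors of `p`. -/
def IsTwistedReducible (F : realDiscAlgebra) (p : ℝ[X]) : Prop :=
  ∃ n, IsReduciblePair F (coord ^ n * aeval coord p) ∧ 0 ≤ (-1) ^ n * (p.eval 1 * p.eval (-1))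

namespace IsTwistedReducible

lemma of_isReduciblePair (h : IsReduciblePair F (aeval coord p))
    (hp : 0 ≤ p.eval 1 * p.eval (-1)) : IsTwistedReducible F p :=
  ⟨0, by rwa [pow_zero, one_mul], by rwa [pow_zero, one_mul]⟩

lemma of_isUnit (F : realDiscAlgebra) (hp : IsUnit p) : IsTwistedReducible F p := by
  refine of_isReduciblePair (.of_isUnit_right F (hp.map _)) ?_
  obtain ⟨a, -, rfl⟩ := Polynomial.isUnit_iff.1 hp
  simpa only [eval_C] using mul_self_nonneg a

lemma mul (hp : IsTwistedReducible F p) (hq : IsTwistedReducible F q) :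
    IsTwistedReducible F (p * q) := by
  obtain ⟨m, hm, hpm⟩ := hp
  obtain ⟨n, hn, hqn⟩ := hq
  refine ⟨m + n, ?_, ?_⟩
  · convert hm.mul hn using 1
    rw [map_mul]
    ring
  · rw [eval_mul, eval_mul]
    linear_combination mul_nonneg hpm hqn

protected lemma conjPairPoly (hF : zeroSet F ⊂ sphere 0 1) (hc : c ∉ zeroSet F) :
    IsTwistedReducible F (conjPairPoly c) :=
  of_isReduciblePair (isReduciblePair_conjPairPoly hF hc)
    (mul_nonneg (eval_conjPairPoly_nonneg c 1) (eval_conjPairPoly_nonneg c (-1)))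

lemma X_sub_C (hF : zeroSet F ⊂ sphere 0 1) {a : ℝ} (ha : (a : ℂ) ∉ zeroSet F) :
    IsTwistedReducible F (X - C a) := by
  have heval : (X - C a).eval 1 * (X - C a).eval (-1) = a ^ 2 - 1 := by
    simp only [eval_sub, eval_X, eval_C]
    ring
  rcases le_or_gt ‖a‖ 1 with h | h
  · refine ⟨1, by simpa only [pow_one] using isReduciblePair_coord_mul_X_sub_C hF h ha, ?_⟩
    rw [heval]
    linarith [(sq_le_one_iff_abs_le_one a).2 h]
  · refine of_isReduciblePair (.of_isUnit_right F (isUnit_aeval_coord_X_sub_C h)) ?_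
    rw [heval]
    exact sub_nonneg.2 ((one_lt_sq_iff_one_lt_abs a).2 h).le

lemma of_irreducible (hF : zeroSet F ⊂ sphere 0 1) (hp : Irreducible p)
    (h : ∀ c ∈ zeroSet F, aeval c p ≠ 0) : IsTwistedReducible F p := by
  obtain ⟨c, hc, ⟨him, u, rfl⟩ | ⟨u, rfl⟩⟩ := exists_associated_X_sub_C_or_conjPairPoly hp
  · have hre : (c.re : ℂ) = c := Complex.ext rfl him.symm
    exact (X_sub_C hF fun hcF ↦ h c (hre ▸ hcF) hc).mul (of_isUnit F u.isUnit)
  · exact (IsTwistedReducible.conjPairPoly hF fun hcF ↦ h c hcF hc).mul (of_isUnit F u.isUnit)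

lemma of_forall_aeval_ne_zero (hF : zeroSet F ⊂ sphere 0 1) (hp : p ≠ 0)
    (h : ∀ c ∈ zeroSet F, aeval c p ≠ 0) : IsTwistedReducible F p := by
  induction p using UniqueFactorizationMonoid.induction_on_prime with
  | h₁ => exact absurd rfl hp
  | h₂ p hu => exact of_isUnit F hu
  | h₃ p π hp0 hπ ih =>
    have hpF : ∀ c ∈ zeroSet F, aeval c π ≠ 0 ∧ aeval c p ≠ 0 := fun c hc ↦
      mul_ne_zero_iff.1 (map_mul (aeval c) π p ▸ h c hc)
    exact (of_irreducible hF hπ.irreducible fun c hc ↦ (hpF c hc).1).mul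
      (ih hp0 fun c hc ↦ (hpF c hc).2)

lemma isReduciblePair (hF : zeroSet F ⊂ sphere 0 1) (h : IsTwistedReducible F p)
    (hsign : 1 ∈ zeroSet F ∧ -1 ∈ zeroSet F → 0 < p.eval 1 * p.eval (-1)) :
    IsReduciblePair F (aeval coord p) := by
  obtain ⟨n, hn, hpn⟩ := h
  refine .of_mul_left ?_ hn
  by_cases hF1 : 1 ∈ zeroSet F ∧ -1 ∈ zeroSet F
  · rcases n.even_or_odd with hev | hodd
    · obtain ⟨m, rfl⟩ := hev.two_dvd
      rw [pow_mul]
      refine .pow ?_ m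
      simpa [conjPairPoly] using
        isReduciblePair_conjPairPoly hF (zero_notMem_zeroSet hF.subset)
    · rw [hodd.neg_one_pow] at hpn
      linarith [hsign hF1]
  · exact (isReduciblePair_coord hF.subset hF1).pow n

end IsTwistedReducible

lemma isReduciblePair_of_isCoprime (hF : zeroSet F ⊂ sphere 0 1) (hFG : IsCoprime F G)
    (hsign : 1 ∈ zeroSet F ∧ -1 ∈ zeroSet F → 0 < (G.1 1).re * (G.1 (-1)).re) :
    IsReduciblePair F G := by
  have hsign_near : ∀ᶠ H : realDiscAlgebra in 𝓝 G,
      1 ∈ zeroSet F ∧ -1 ∈ zeroSet F → 0 < (H.1 1).re * (H.1 (-1)).re := by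
    refine eventually_imp_distrib_left.2 fun h ↦ ?_
    have hcont : Continuous fun H : realDiscAlgebra ↦ (H.1 1).re * (H.1 (-1)).re := by fun_prop
    exact hcont.continuousAt.eventually (lt_mem_nhds (hsign h))
  obtain ⟨_, ⟨p, rfl⟩, hiff, hcop, hp⟩ :=
    ((mem_closure_iff_frequently.1 (denseRange_aeval_coord G)).and_eventually
      ((IsReduciblePair.eventually_iff hFG).and
        ((eventually_isCoprime hFG).and hsign_near))).exists
  refine hiff.1 ?_
  rcases eq_or_ne p 0 with rfl | hp0
  · rw [map_zero, isCoprime_zero_right] at hcop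
    exact .of_isUnit_left hcop _
  · refine (IsTwistedReducible.of_forall_aeval_ne_zero hF hp0
      ((isCoprime_aeval_coord_iff hp0).1 hcop)).isReduciblePair hF fun h ↦ ?_
    simpa [aeval_coord_apply, ← aeval_ofReal_re] using hp h

lemma eq_zero_of_sphere_subset_zeroSet (hF : sphere 0 1 ⊆ zeroSet F) : F = 0 := by
  obtain ⟨f, hf, rfl⟩ := exists_isRDisc F
  have hcl : closure (ball (0 : ℂ) 1) = closedBall 0 1 := closure_ball 0 one_ne_zero
  have hfr : ∀ z ∈ frontier (ball (0 : ℂ) 1), ‖f z‖ ≤ 0 := by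
    rw [frontier_ball (0 : ℂ) one_ne_zero]
    exact fun z hz ↦ (norm_eq_zero.2 (eq_zero_of_mem_zeroSet (hF hz))).le
  have hdiff : DiffContOnCl ℂ f (ball 0 1) := ⟨hf.2.1, by rw [hcl]; exact hf.1⟩
  ext z
  exact norm_le_zero_iff.1 (Complex.norm_le_of_forall_mem_frontier_norm_le isBounded_ball
    hdiff hfr (by rw [hcl]; exact z.2))

lemma zeroSet_subset_sphere (hF : F ≠ 0) (hrange : Set.range F.1 ∉ 𝓝 0) :
    zeroSet F ⊆ sphere 0 1 := by
  obtain ⟨f, hf, rfl⟩ := exists_isRDisc F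
  rintro _ ⟨z, hz, rfl⟩
  by_contra hzs
  have hzb : (z : ℂ) ∈ ball (0 : ℂ) 1 := by
    rw [← closedBall_sdiff_sphere]
    exact ⟨z.2, hzs⟩
  rcases (hf.2.1.analyticOnNhd isOpen_ball).is_constant_or_isOpen
    (convex_ball 0 1).isPreconnected with ⟨a, ha⟩ | hopen
  · have hf0 : Set.EqOn f (fun _ ↦ 0) (ball 0 1) := fun w hw ↦
      (ha w hw).trans ((ha z hzb).symm.trans hz)
    have hf0' : Set.EqOn f (fun _ ↦ 0) (closedBall 0 1) :=
      hf0.of_subset_closure hf.1 continuousOn_const ball_subset_closedBall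
        (closure_ball (0 : ℂ) one_ne_zero).ge
    exact hF (Subtype.ext (ContinuousMap.ext fun w ↦ hf0' w.2))
  · refine hrange (mem_of_superset ((hopen _ subset_rfl isOpen_ball).mem_nhds ⟨z, hzb, hz⟩) ?_)
    rintro _ ⟨y, hy, rfl⟩
    exact ⟨⟨y, ball_subset_closedBall hy⟩, rfl⟩

lemma range_notMem_nhds_zero (hF : ∃ᶠ x : ℝ in 𝓝 0, IsUnit (algebraMap ℝ realDiscAlgebra x - F)) :
    Set.range F.1 ∉ 𝓝 0 := fun hmem ↦ by
  obtain ⟨x, hx, z, hz⟩ := (hF.and_eventually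
    (continuous_ofReal.continuousAt.eventually_mem (by simpa using hmem))).exists
  exact isUnit_iff.1 hx z (sub_eq_zero.2 hz.symm)

lemma exists_isUnit_mul_add_mul_eq_one
    (hF : ∃ᶠ x : ℝ in 𝓝 0, IsUnit (algebraMap ℝ realDiscAlgebra x - F)) (hFG : IsCoprime F G)
    (hsign : 1 ∈ zeroSet F ∧ -1 ∈ zeroSet F → 0 < (G.1 1).re * (G.1 (-1)).re) :
    ∃ u v : realDiscAlgebra, IsUnit u ∧ IsUnit v ∧ u * F + v * G = 1 := by
  refine IsReduciblePair.exists_isUnit_mul_add_mul_eq_one ?_ hF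
  rcases eq_or_ne F 0 with rfl | hF0
  · exact .of_isUnit_right 0 (isCoprime_zero_left.1 hFG)
  · exact isReduciblePair_of_isCoprime
      ⟨zeroSet_subset_sphere hF0 (range_notMem_nhds_zero hF),
        fun h ↦ hF0 (eq_zero_of_sphere_subset_zeroSet h)⟩ hFG hsign

end realDiscAlgebra

open realDiscAlgebra

lemma ConstSignOnRealZeros.mul_pos {f g : ℂ → ℂ} (h : ConstSignOnRealZeros g f) {x y : ℝ}
    (hx : x ∈ Set.Icc (-1 : ℝ) 1) (hy : y ∈ Set.Icc (-1 : ℝ) 1) (hfx : f x = 0) (hfy : f y = 0) :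
    0 < (g x).re * (g y).re :=
  h.elim (fun hpos ↦ _root_.mul_pos (hpos x hx hfx) (hpos y hy hfy))
    fun hneg ↦ mul_pos_of_neg_of_neg (hneg x hx hfx) (hneg y hy hfy)

theorem totally_reducible_of_omitted_real_values (f : ℂ → ℂ) (hf : IsRDisc f)
    (x : ℕ → ℝ) (hx : Filter.Tendsto x Filter.atTop (nhds 0))
    (hmiss : ∀ n : ℕ, ((x n : ℂ)) ∉ f '' closedBall (0 : ℂ) 1)
    (g : ℂ → ℂ) (hg : IsRDisc g) (hinv : BezoutPair f g)
    (hsign : ConstSignOnRealZeros g f) :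
    ∃ u v : ℂ → ℂ, IsRDiscUnit u ∧ IsRDiscUnit v ∧
      ∀ z ∈ closedBall (0 : ℂ) 1, u z * f z + v z * g z = 1 := by
  have hunit (n : ℕ) : IsUnit (algebraMap ℝ realDiscAlgebra (x n) - hf.toRealDiscAlgebra) :=
    isUnit_iff.2 fun z hz ↦ hmiss n ⟨z, z.2, (sub_eq_zero.1 hz).symm⟩
  have hsign_ends : 1 ∈ zeroSet hf.toRealDiscAlgebra ∧ -1 ∈ zeroSet hf.toRealDiscAlgebra →
      0 < (g 1).re * (g (-1)).re := by
    rintro ⟨h1, h2⟩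
    simpa using hsign.mul_pos (x := 1) (y := -1) (by simp) (by simp)
      (by simpa using eq_zero_of_mem_zeroSet h1) (by simpa using eq_zero_of_mem_zeroSet h2)
  obtain ⟨u, v, hu, hv, huv⟩ := exists_isUnit_mul_add_mul_eq_one
    (hx.frequently (.of_forall hunit)) (isCoprime_toRealDiscAlgebra hf hg hinv) hsign_ends
  obtain ⟨u', hu', hu_eq⟩ := exists_isRDiscUnit hu
  obtain ⟨v', hv', hv_eq⟩ := exists_isRDiscUnit hv
  refine ⟨u', v', hu', hv', fun z hz ↦ ?_⟩
  rw [← hu_eq ⟨z, hz⟩, ← hv_eq ⟨z, hz⟩]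
  exact congrArg (fun F : realDiscAlgebra ↦ F.1 ⟨z, hz⟩) huv
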